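/- arXiv:2404.07914 — 4 statements merged into one kernel-verified Lean document; each statement's English description precedes it below -/
import Mathlib

section
/- For every integer m ≥ 0 and all real numbers x, y with 0 < y ≤ 1 < x, the integral J(m,x,y) = ∫_{-π}^{π} (1 − x·cos θ)·cos(mθ) / (y² + (1−y²)·cos²θ − 2x·cos θ + x²) dθ equals π·[(1−y)^m − (1+y)^m] / (y·(x + √(x² + y² − 1))^m). -/
/-!
Put `k = x + √(x² + y² - 1)`, `p = (1 - y) / k` and `q = (1 + y) / k`, so that `0 ≤ p < q < 1`. Since
`2 x k = k² + 1 - y²`, the denominator of the integrand factors as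
`(k / 2)² (1 - 2 p cos θ + p²) (1 - 2 q cos θ + q²)`, and a partial fraction decomposition writes
`(1 - x cos θ) / denominator` as `(P_p θ - P_q θ) / (2 y)`, where
`P_r θ = (1 - r²) / (1 - 2 r cos θ + r²)` is the Poisson kernel (`partial_fractions`).
By the Poisson integral formula for `z ↦ z ^ m`, the integral of `P_r θ cos (m θ)` over a
period is `2 π r ^ m` (`integral_poisson_cos`).
-/

lemma poisson_denom_pos {r : ℝ} (h0 : 0 ≤ r) (h1 : r < 1) (θ : ℝ) :
    0 < 1 - 2 * r * Real.cos θ + r ^ 2 := by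
  nlinarith [Real.cos_le_one θ, mul_nonneg h0 (sub_nonneg.2 (Real.cos_le_one θ)),
    pow_pos (sub_pos.2 h1) 2]

lemma continuous_poisson_cos (m : ℕ) {r : ℝ} (h0 : 0 ≤ r) (h1 : r < 1) :
    Continuous fun θ : ℝ =>
      (1 - r ^ 2) / (1 - 2 * r * Real.cos θ + r ^ 2) * Real.cos (m * θ) :=
  (Continuous.div (by fun_prop) (by fun_prop)
    fun θ => (poisson_denom_pos h0 h1 θ).ne').mul (by fun_prop)

/-- The Fourier cosine coefficients of the Poisson kernel: the real part of the Poisson integral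
formula for `z ↦ z ^ m` at the point `r`. -/
lemma integral_poisson_cos (m : ℕ) {r : ℝ} (h0 : 0 ≤ r) (h1 : r < 1) :
    ∫ θ in (-Real.pi)..Real.pi,
      (1 - r ^ 2) / (1 - 2 * r * Real.cos θ + r ^ 2) * Real.cos (m * θ)
    = 2 * Real.pi * r ^ m := by
  have hd : DiffContOnCl ℂ (fun z : ℂ => z ^ m) (Metric.ball 0 1) :=
    (by fun_prop : Differentiable ℂ fun z : ℂ => z ^ m).diffContOnCl
  have hw : (r : ℂ) ∈ Metric.ball (0 : ℂ) 1 := by simpa [abs_of_nonneg h0] using h1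
  have key := hd.circleAverage_poissonKernel_smul' hw
  have hfun : ∀ θ : ℝ,
      ((‖circleMap 0 1 θ - 0‖ ^ 2 - ‖(r : ℂ) - 0‖ ^ 2) /
        ‖(circleMap 0 1 θ - 0) - ((r : ℂ) - 0)‖ ^ 2) • (circleMap 0 1 θ) ^ m
      = (((1 - r ^ 2) / (1 - 2 * r * Real.cos θ + r ^ 2) : ℝ) : ℂ)
          * Complex.exp ((m * θ : ℝ) * Complex.I) := by
    intro θ
    have e1 : ‖circleMap 0 1 θ - (r : ℂ)‖ ^ 2 = 1 - 2 * r * Real.cos θ + r ^ 2 := by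
      rw [← Complex.normSq_eq_norm_sq, Complex.normSq_apply]
      simp only [circleMap, Complex.ofReal_one, one_mul, zero_add, Complex.sub_re, Complex.sub_im,
        Complex.exp_ofReal_mul_I_re, Complex.exp_ofReal_mul_I_im, Complex.ofReal_re,
        Complex.ofReal_im]
      nlinarith [Real.sin_sq_add_cos_sq θ]
    have e2 : (circleMap 0 1 θ) ^ m = Complex.exp ((m * θ : ℝ) * Complex.I) := by
      simp only [circleMap, Complex.ofReal_one, one_mul, zero_add, ← Complex.exp_nat_mul]
      push_cast
      ring_nf
    rw [sub_zero, sub_zero, e1, e2, Complex.real_smul]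
    simp
  rw [Real.circleAverage_def] at key
  simp only [hfun] at key
  have hcont : Continuous fun θ : ℝ =>
      (((1 - r ^ 2) / (1 - 2 * r * Real.cos θ + r ^ 2) : ℝ) : ℂ)
          * Complex.exp ((m * θ : ℝ) * Complex.I) := by
    refine (Complex.continuous_ofReal.comp (Continuous.div (by fun_prop) (by fun_prop)
      fun θ => (poisson_denom_pos h0 h1 θ).ne')).mul (by fun_prop)
  have hre := Complex.reCLM.intervalIntegral_comp_comm
    (hcont.intervalIntegrable (μ := MeasureTheory.volume) 0 (2 * Real.pi))
  have key2 := congrArg Complex.re key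
  rw [Complex.real_smul, Complex.re_ofReal_mul, ← Complex.reCLM_apply, ← hre] at key2
  simp only [Complex.reCLM_apply, Complex.re_ofReal_mul, Complex.exp_ofReal_mul_I_re,
    ← Complex.ofReal_pow, Complex.ofReal_re] at key2
  -- The formula lives on `[0, 2π]`; periodicity moves it to `[-π, π]`.
  have hper : Function.Periodic (fun θ : ℝ =>
      (1 - r ^ 2) / (1 - 2 * r * Real.cos θ + r ^ 2) * Real.cos (m * θ)) (2 * Real.pi) := by
    intro θ
    simp only [Real.cos_add_two_pi, mul_add, Real.cos_add_nat_mul_two_pi]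
  have hshift := hper.intervalIntegral_add_eq (-Real.pi) 0
  rw [show -Real.pi + 2 * Real.pi = Real.pi by ring, zero_add] at hshift
  rw [hshift, ← key2]
  field_simp

/-- The relation `2 x k = k² + 1 - y²` says that `k` is a root of `k² - 2 x k + 1 - y²`. -/
lemma partial_fractions {x y k c : ℝ} (hy : y ≠ 0) (hk : k ≠ 0)
    (hxk : 2 * x * k = k ^ 2 + 1 - y ^ 2)
    (hp : 1 - 2 * ((1 - y) / k) * c + ((1 - y) / k) ^ 2 ≠ 0)
    (hq : 1 - 2 * ((1 + y) / k) * c + ((1 + y) / k) ^ 2 ≠ 0) :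
    (1 - x * c) / (y ^ 2 + (1 - y ^ 2) * c ^ 2 - 2 * x * c + x ^ 2)
      = (2 * y)⁻¹ *
        ((1 - ((1 - y) / k) ^ 2) / (1 - 2 * ((1 - y) / k) * c + ((1 - y) / k) ^ 2)
          - (1 - ((1 + y) / k) ^ 2) / (1 - 2 * ((1 + y) / k) * c + ((1 + y) / k) ^ 2)) := by
  have hx : x = (k ^ 2 + 1 - y ^ 2) / (2 * k) := by field_simp; linarith
  have hD : y ^ 2 + (1 - y ^ 2) * c ^ 2 - 2 * x * c + x ^ 2
      = (k / 2) ^ 2 * ((1 - 2 * ((1 - y) / k) * c + ((1 - y) / k) ^ 2)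
        * (1 - 2 * ((1 + y) / k) * c + ((1 + y) / k) ^ 2)) := by
    rw [hx]; field_simp; ring
  rw [hD, div_sub_div _ _ hp hq, inv_mul_eq_div, div_div, div_eq_div_iff (by positivity)
    (by positivity), hx]
  field_simp
  ring

/-- For every integer `m ≥ 0` and all real `x, y` with `0 < y ≤ 1 < x`, the
integral `J(m,x,y) = ∫_{-π}^{π} (1 − x cos θ) cos(mθ) / (y² + (1−y²) cos²θ − 2x cos θ + x²) dθ`
equals `π ((1−y)^m − (1+y)^m) / (y (x + √(x² + y² − 1))^m)`. -/
theorem stmt0 (m : ℕ) (x y : ℝ) (hy0 : 0 < y) (hy1 : y ≤ 1) (hx : 1 < x) :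
    (∫ θ in (-Real.pi)..Real.pi,
      ((1 - x * Real.cos θ) * Real.cos (m * θ)) /
        (y ^ 2 + (1 - y ^ 2) * Real.cos θ ^ 2 - 2 * x * Real.cos θ + x ^ 2))
    = Real.pi * ((1 - y) ^ m - (1 + y) ^ m) /
        (y * (x + Real.sqrt (x ^ 2 + y ^ 2 - 1)) ^ m) := by
  have hs : Real.sqrt (x ^ 2 + y ^ 2 - 1) ^ 2 = x ^ 2 + y ^ 2 - 1 :=
    Real.sq_sqrt (by nlinarith)
  have hsy : y < Real.sqrt (x ^ 2 + y ^ 2 - 1) := Real.lt_sqrt_of_sq_lt (by nlinarith)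
  set k := x + Real.sqrt (x ^ 2 + y ^ 2 - 1) with hkdef
  have hk : 1 + y < k := by linarith
  have hk0 : 0 < k := by linarith
  have hxk : 2 * x * k = k ^ 2 + 1 - y ^ 2 := by rw [hkdef]; nlinarith
  have hp0 : 0 ≤ (1 - y) / k := div_nonneg (by linarith) hk0.le
  have hp1 : (1 - y) / k < 1 := (div_lt_one hk0).2 (by linarith)
  have hq0 : 0 ≤ (1 + y) / k := by positivity
  have hq1 : (1 + y) / k < 1 := (div_lt_one hk0).2 hk
  have hint : ∀ θ : ℝ, ((1 - x * Real.cos θ) * Real.cos (m * θ)) /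
        (y ^ 2 + (1 - y ^ 2) * Real.cos θ ^ 2 - 2 * x * Real.cos θ + x ^ 2)
      = (2 * y)⁻¹ * ((1 - ((1 - y) / k) ^ 2) /
            (1 - 2 * ((1 - y) / k) * Real.cos θ + ((1 - y) / k) ^ 2) * Real.cos (m * θ)
          - (1 - ((1 + y) / k) ^ 2) /
            (1 - 2 * ((1 + y) / k) * Real.cos θ + ((1 + y) / k) ^ 2) * Real.cos (m * θ)) := by
    intro θ
    rw [mul_div_right_comm, partial_fractions hy0.ne' hk0.ne' hxk
      (poisson_denom_pos hp0 hp1 θ).ne' (poisson_denom_pos hq0 hq1 θ).ne']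
    ring
  simp only [hint]
  rw [intervalIntegral.integral_const_mul, intervalIntegral.integral_sub
    ((continuous_poisson_cos m hp0 hp1).intervalIntegrable _ _)
    ((continuous_poisson_cos m hq0 hq1).intervalIntegrable _ _),
    integral_poisson_cos m hp0 hp1, integral_poisson_cos m hq0 hq1, div_pow, div_pow]
  field_simp
end

section
/- For every real x > 1, J(0,x,1) + J(0,1/x,1) = 2π, and for every integer m ≥ 1 and every real x > 1, J(m,x,1) + J(m,1/x,1) = 0. -/
/-!
At `y = 1` the denominator is `D = x² - 2x cos θ + 1 ≥ (x - 1)² > 0`. Multiplying the numerator and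
denominator of the integrand of `J(m,1/x,1)` by `x²` gives `(x² - x cos θ) cos(mθ) / D`, so the two
integrands add up to exactly `cos(mθ)`. Its integral over `[-π, π]` is `2π` for `m = 0` and `0`
otherwise.
-/

/-- The integral `J(m,x,y)` from the paper. -/
noncomputable def J (m : ℕ) (x y : ℝ) : ℝ :=
  ∫ θ in (-Real.pi)..Real.pi,
    ((1 - x * Real.cos θ) * Real.cos (m * θ)) /
      (y ^ 2 + (1 - y ^ 2) * Real.cos θ ^ 2 - 2 * x * Real.cos θ + x ^ 2)

lemma J_denom_pos {x : ℝ} (hx : 0 < x) (hx1 : x ≠ 1) (θ : ℝ) :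
    0 < (1 : ℝ) ^ 2 + (1 - 1 ^ 2) * Real.cos θ ^ 2 - 2 * x * Real.cos θ + x ^ 2 := by
  have h : 0 < (x - 1) ^ 2 := by
    have := sub_ne_zero.mpr hx1
    positivity
  nlinarith [Real.cos_le_one θ]

lemma J_integrable {x : ℝ} (hx : 0 < x) (hx1 : x ≠ 1) (m : ℕ) :
    IntervalIntegrable (fun θ : ℝ => ((1 - x * Real.cos θ) * Real.cos (m * θ)) /
      ((1 : ℝ) ^ 2 + (1 - 1 ^ 2) * Real.cos θ ^ 2 - 2 * x * Real.cos θ + x ^ 2))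
      MeasureTheory.volume (-Real.pi) Real.pi := by
  apply Continuous.intervalIntegrable
  exact Continuous.div (by fun_prop) (by fun_prop) fun θ => (J_denom_pos hx hx1 θ).ne'

lemma J_add_J_inv (m : ℕ) {x : ℝ} (hx : 1 < x) :
    J m x 1 + J m (1 / x) 1 = ∫ θ in (-Real.pi)..Real.pi, Real.cos (m * θ) := by
  have hx0 : 0 < x := by linarith
  have hi0 : 0 < 1 / x := by positivity
  have hi1 : 1 / x ≠ 1 := ((div_lt_one hx0).mpr hx).ne
  unfold J
  rw [← intervalIntegral.integral_add (J_integrable hx0 hx.ne' m) (J_integrable hi0 hi1 m)]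
  congr 1
  ext θ
  have h1 := (J_denom_pos hx0 hx.ne' θ).ne'
  have h2 : (1 : ℝ) ^ 2 + (1 - 1 ^ 2) * Real.cos θ ^ 2 - 2 * (1 / x) * Real.cos θ + (1 / x) ^ 2
      = (1 ^ 2 + (1 - 1 ^ 2) * Real.cos θ ^ 2 - 2 * x * Real.cos θ + x ^ 2) / x ^ 2 := by
    field_simp
    ring
  rw [h2, div_div_eq_mul_div, ← add_div, div_eq_iff h1]
  field_simp
  ring

/-- For every real `x > 1`, `J(0,x,1) + J(0,1/x,1) = 2π`, and for every integer
`m ≥ 1` and every real `x > 1`, `J(m,x,1) + J(m,1/x,1) = 0`. -/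
theorem stmt3 :
    (∀ x : ℝ, 1 < x → J 0 x 1 + J 0 (1 / x) 1 = 2 * Real.pi) ∧
    (∀ m : ℕ, 1 ≤ m → ∀ x : ℝ, 1 < x → J m x 1 + J m (1 / x) 1 = 0) := by
  refine ⟨fun x hx => ?_, fun m hm x hx => ?_⟩
  · rw [J_add_J_inv 0 hx]
    simp
    ring
  · have hm0 : (m : ℝ) ≠ 0 := by
      exact_mod_cast (by omega : m ≠ 0)
    rw [J_add_J_inv m hx, intervalIntegral.integral_comp_mul_left _ hm0, integral_cos]
    simp [Real.sin_nat_mul_pi]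
end

section
/- Fix reals 0 < ρ_aux < ρ_cyl < ρ_fil and a real I ≠ 0; set s = ρ_aux/ρ_cyl, r = ρ_cyl/ρ_fil, and ρ_cri = ρ_cyl²/ρ_fil. Fix an integer m ≥ 1 and for each integer N > m let I^(m)_N = (I/N)·(r^{N−m} + r^m)·(1 − s^N)/((s^{N−m} + s^m)·(1 − r^N)). Then lim_{N→∞} N·I^(m)_N = I·(ρ_cri/ρ_aux)^m. -/
/-!
Since `0 < s, r < 1`, the powers `s ^ N`, `r ^ N`, `s ^ (N - m)`, `r ^ (N - m)` all tend to `0`, so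
`N * Im N` tends to `I * r ^ m / s ^ m`; the denominator's limit `s ^ m` is nonzero. The limit is the
claimed one because `ρcri / ρaux = r / s`.
-/

/-- Fix reals `0 < ρ_aux < ρ_cyl < ρ_fil` and `I ≠ 0`; set `s = ρ_aux/ρ_cyl`,
`r = ρ_cyl/ρ_fil`, `ρ_cri = ρ_cyl²/ρ_fil`. Fix an integer `m ≥ 1` and for `N > m` let
`I^(m)_N = (I/N)(r^{N−m} + r^m)(1 − s^N)/((s^{N−m} + s^m)(1 − r^N))`. Then
`lim_{N→∞} N I^(m)_N = I (ρ_cri/ρ_aux)^m`. -/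
theorem stmt12 (ρaux ρcyl ρfil I s r ρcri : ℝ)
    (h0 : 0 < ρaux) (h1 : ρaux < ρcyl) (h2 : ρcyl < ρfil) (hI : I ≠ 0)
    (hs : s = ρaux / ρcyl) (hr : r = ρcyl / ρfil) (hcri : ρcri = ρcyl ^ 2 / ρfil)
    (m : ℕ) (hm : 1 ≤ m)
    (Im : ℕ → ℝ)
    (hIm : ∀ N : ℕ, m < N → Im N = (I / N) * (r ^ (N - m) + r ^ m) * (1 - s ^ N) /
      ((s ^ (N - m) + s ^ m) * (1 - r ^ N))) :
    Filter.Tendsto (fun N : ℕ => (N : ℝ) * Im N)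
      Filter.atTop (nhds (I * (ρcri / ρaux) ^ m)) := by
  have hc : 0 < ρcyl := h0.trans h1
  have hf : 0 < ρfil := hc.trans h2
  have hs0 : 0 < s := hs ▸ div_pos h0 hc
  have hr0 : 0 < r := hr ▸ div_pos hc hf
  have hs1 : s < 1 := hs ▸ (div_lt_one hc).2 h1
  have hr1 : r < 1 := hr ▸ (div_lt_one hf).2 h2
  have hratio : ρcri / ρaux = r / s := by
    rw [hcri, hr, hs]
    field_simp
  have ts := tendsto_pow_atTop_nhds_zero_of_lt_one hs0.le hs1
  have tr := tendsto_pow_atTop_nhds_zero_of_lt_one hr0.le hr1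
  have tsm := ts.comp (Filter.tendsto_sub_atTop_nat m)
  have trm := tr.comp (Filter.tendsto_sub_atTop_nat m)
  have hden : ((0 : ℝ) + s ^ m) * (1 - 0) ≠ 0 := by
    simpa using (pow_pos hs0 m).ne'
  have key := (((trm.add_const (r ^ m)).const_mul I).mul (ts.const_sub 1)).div
    ((tsm.add_const (s ^ m)).mul (tr.const_sub 1)) hden
  have hlim : I * (0 + r ^ m) * (1 - 0) / ((0 + s ^ m) * (1 - 0)) = I * (ρcri / ρaux) ^ m := by
    rw [hratio, div_pow]
    ring
  rw [hlim] at key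
  refine key.congr' ?_
  filter_upwards [Filter.eventually_gt_atTop m] with N hN
  have hN0 : (N : ℝ) ≠ 0 := by
    exact_mod_cast (Nat.zero_le m |>.trans_lt hN).ne'
  have hNI : (N : ℝ) * (I / N) = I := mul_div_cancel₀ I hN0
  simp only [Pi.div_apply, Function.comp_apply]
  rw [hIm N hN, ← mul_div_assoc, ← mul_assoc, ← mul_assoc, hNI]
end

section
/- Fix reals 0 < ρ_aux < ρ_cyl and set s = ρ_aux/ρ_cyl ∈ (0,1). For an integer N ≥ 3 define B^(0)_N = s^N/(1 − s^N) and B^(m)_N = (1/2)·(s^{N−m} + s^m)/(1 − s^N) for m = 1,…,N−1. Then: (i) for every N ≥ 3 and every m = 1,…,N−1, B^(0)_N < B^(m)_N ≤ B^(1)_N; and (ii) lim_{N→∞} (B^(1)_N / B^(0)_N)·(ρ_aux/ρ_cyl)^{N−1} = 1/2. -/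
/-!
All the quantities share the positive denominator `1 - s ^ N`, so only numerators matter.
Writing `N = m + k` with `m, k ≥ 1`, the lower bound is `s ^ m * s ^ k < (s ^ k + s ^ m) / 2`,
true because both factors lie in `(0, 1)`. With `m = p + 1` and `k = q + 1`, the upper bound is
`s` times the inequality `s ^ p + s ^ q ≤ 1 + s ^ p * s ^ q`, that is,
`(1 - s ^ p) * (1 - s ^ q) ≥ 0`. For the limit, the sequence equals `(s ^ (N - 1) + s) / (2 * s)`
exactly for `N ≥ 3`, and `s ^ (N - 1) → 0`.
-/

/-- Fix reals `0 < ρ_aux < ρ_cyl`, set `s = ρ_aux/ρ_cyl`. For an integer `N ≥ 3`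
define `B^(0)_N = s^N/(1 − s^N)` and `B^(m)_N = (1/2)(s^{N−m} + s^m)/(1 − s^N)` for
`m = 1,…,N−1`. Then: (i) for every `N ≥ 3` and every `m = 1,…,N−1`,
`B^(0)_N < B^(m)_N ≤ B^(1)_N`; and
(ii) `lim_{N→∞} (B^(1)_N / B^(0)_N)(ρ_aux/ρ_cyl)^{N−1} = 1/2`. -/
theorem stmt15 (ρaux ρcyl s : ℝ) (h0 : 0 < ρaux) (h1 : ρaux < ρcyl) (hs : s = ρaux / ρcyl)
    (B : ℕ → ℕ → ℝ)
    (hB0 : ∀ N : ℕ, 3 ≤ N → B N 0 = s ^ N / (1 - s ^ N))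
    (hBm : ∀ N m : ℕ, 3 ≤ N → 1 ≤ m → m ≤ N - 1 →
      B N m = (1 / 2) * (s ^ (N - m) + s ^ m) / (1 - s ^ N)) :
    (∀ N : ℕ, 3 ≤ N → ∀ m : ℕ, 1 ≤ m → m ≤ N - 1 → B N 0 < B N m ∧ B N m ≤ B N 1) ∧
    Filter.Tendsto (fun N : ℕ => (B N 1 / B N 0) * (ρaux / ρcyl) ^ (N - 1))
      Filter.atTop (nhds (1 / 2)) := by
  have hs0 : 0 < s := hs ▸ div_pos h0 (h0.trans h1)
  have hs1 : s < 1 := hs ▸ (div_lt_one (h0.trans h1)).2 h1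
  have hden : ∀ N : ℕ, 3 ≤ N → 0 < 1 - s ^ N := fun N hN =>
    sub_pos.2 (pow_lt_one₀ hs0.le hs1 (by omega))
  refine ⟨fun N hN m hm hmN => ?_, ?_⟩
  · rw [hB0 N hN, hBm N m hN hm hmN, hBm N 1 hN le_rfl (by omega)]
    have hd := hden N hN
    obtain ⟨p, rfl⟩ : ∃ p, m = p + 1 := ⟨m - 1, by omega⟩
    obtain ⟨q, rfl⟩ : ∃ q, N = (p + 1) + (q + 1) := ⟨N - (p + 1) - 1, by omega⟩
    have e1 : p + 1 + (q + 1) - (p + 1) = q + 1 := by omega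
    have e2 : p + 1 + (q + 1) - 1 = p + q + 1 := by omega
    rw [e1, e2]
    constructor
    · apply div_lt_div_of_pos_right _ hd
      have ha : 0 < s ^ (p + 1) := pow_pos hs0 _
      have hb : 0 < s ^ (q + 1) := pow_pos hs0 _
      have ha1 : s ^ (p + 1) < 1 := pow_lt_one₀ hs0.le hs1 (by omega)
      have hb1 : s ^ (q + 1) < 1 := pow_lt_one₀ hs0.le hs1 (by omega)
      rw [pow_add s (p + 1) (q + 1)]
      nlinarith [mul_pos ha (sub_pos.2 hb1), mul_pos hb (sub_pos.2 ha1)]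
    · apply div_le_div_of_nonneg_right _ hd.le
      have hp : s ^ p ≤ 1 := pow_le_one₀ hs0.le hs1.le
      have hq : s ^ q ≤ 1 := pow_le_one₀ hs0.le hs1.le
      have key := mul_nonneg hs0.le (mul_nonneg (sub_nonneg.2 hp) (sub_nonneg.2 hq))
      have e : s ^ (p + q + 1) = s * (s ^ p * s ^ q) := by ring
      rw [e, pow_succ s p, pow_succ s q]
      nlinarith [key]
  · have hlim : Filter.Tendsto (fun N : ℕ => (s ^ (N - 1) + s) / (2 * s))
        Filter.atTop (nhds (1 / 2)) := by
      have h := (tendsto_pow_atTop_nhds_zero_of_lt_one hs0.le hs1).comp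
        (Filter.tendsto_sub_atTop_nat 1)
      have h' := (h.add_const s).div_const (2 * s)
      have e : (0 + s) / (2 * s) = 1 / 2 := by field_simp; ring
      rwa [e] at h'
    refine hlim.congr' ?_
    filter_upwards [Filter.eventually_ge_atTop 3] with N hN
    have hd := (hden N hN).ne'
    rw [← hs, hB0 N hN, hBm N 1 hN le_rfl (by omega), div_div_div_cancel_right₀ hd]
    obtain ⟨n, rfl⟩ : ∃ n, N = n + 1 := ⟨N - 1, by omega⟩
    have hn : s ^ n ≠ 0 := (pow_pos hs0 n).ne'
    rw [Nat.add_sub_cancel, pow_one, pow_succ]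
    field_simp
end
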